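/- Let γ=(B,M,S,A,Â) be a market with middlemen and γ*=(B,S,A*) the associated two-sided assignment market. If (x;0;z)∈Core(v_γ) is a core allocation giving every middleman payoff zero, then the restricted payoff vector (x;z)∈R^B×R^S belongs to Core(w_{γ*}). -/

import Mathlib

/-!
Matching markets with middlemen (Atay, Bahel, Solymosi).

Players are of three sorts: buyers `B`, middlemen `M`, sellers `S`
(three disjoint nonempty finite types); the player set is `Player B M S = B ⊕ M ⊕ S`.
An (functional representation of a) `T`-matching assigns to each buyer either nothing
(the buyer is single), a seller (direct trade), or a middleman together with a seller
(mediated trade); distinct buyers get distinct sellers, and all agents involved lie in `T`.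
A middleman may mediate several trades.
-/

open scoped Classical

noncomputable section

/-- The set of players of a market with middlemen: buyers `B`, middlemen `M`, sellers `S`. -/
abbrev Player (B M S : Type*) := B ⊕ M ⊕ S

/-- Functional representation of a matching in the market with middlemen: each buyer is
unmatched (`none`), matched directly to a seller (`some (none, k)`), or matched to a seller
through a middleman (`some (some j, k)`). -/
abbrev MMatch (B M S : Type*) := B → Option (Option M × S)

namespace Middlemen

variable {B M S : Type*}

/-- A buyer as a player. -/
def buyer (i : B) : Player B M S := Sum.inl i

/-- A middleman as a player. -/
def mid (j : M) : Player B M S := Sum.inr (Sum.inl j)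

/-- A seller as a player. -/
def seller (k : S) : Player B M S := Sum.inr (Sum.inr k)

/-- `f` is a `T`-matching in the market with middlemen: every basic coalition used by `f`
is contained in `T` and no seller is matched to two distinct buyers.  (Buyers, middlemen
and sellers of `T` not appearing in any trade are singletons of the matching.) -/
def IsMatching (T : Finset (Player B M S)) (f : MMatch B M S) : Prop :=
  (∀ i o k, f i = some (o, k) →
      buyer i ∈ T ∧ seller k ∈ T ∧ ∀ j, o = some j → mid j ∈ T) ∧
  (∀ i i' o o' k, f i = some (o, k) → f i' = some (o', k) → i = i')

variable [Fintype B] [Fintype M] [Fintype S]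

/-- The value `Σ_{(i,k)∈μ} a_{ik} + Σ_{(i,j,k)∈μ} â_{ijk}` of a matching in the market
with middlemen with direct-trade surplus matrix `A` and mediated-trade surpluses `Ah`. -/
def mval (A : B → S → ℝ) (Ah : B → M → S → ℝ) (f : MMatch B M S) : ℝ :=
  ∑ i, (match f i with
    | none => 0
    | some (none, k) => A i k
    | some (some j, k) => Ah i j k)

/-- The TU game `v_γ` associated with the market with middlemen `γ = (B,M,S,A,Ah)`:
the worth of a coalition `T` is the maximal value of a `T`-matching. -/
def vGame (A : B → S → ℝ) (Ah : B → M → S → ℝ) (T : Finset (Player B M S)) : ℝ :=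
  sSup { r | ∃ f : MMatch B M S, IsMatching T f ∧ r = mval A Ah f }

/-- `g` is a matching of the coalition `R` in a two-sided assignment market. -/
def IsMatching2 (R : Finset (B ⊕ S)) (g : B → Option S) : Prop :=
  (∀ i k, g i = some k → Sum.inl i ∈ R ∧ Sum.inr k ∈ R) ∧
  (∀ i i' k, g i = some k → g i' = some k → i = i')

/-- The value of a two-sided matching with valuation matrix `As`. -/
def m2val (As : B → S → ℝ) (g : B → Option S) : ℝ :=
  ∑ i, (match g i with
    | none => 0
    | some k => As i k)

/-- The assignment game `w_{γ*}` of the two-sided assignment market `(B,S,As)`. -/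
def wGame (As : B → S → ℝ) (R : Finset (B ⊕ S)) : ℝ :=
  sSup { r | ∃ g : B → Option S, IsMatching2 R g ∧ r = m2val As g }

/-- The matrix `A*` of the associated two-sided assignment market:
`a*_{ik} = max_{j ∈ M} â_{ijk}`. -/
def Astar [Nonempty M] (Ah : B → M → S → ℝ) (i : B) (k : S) : ℝ :=
  Finset.univ.sup' Finset.univ_nonempty fun j => Ah i j k

/-- The two-sided matching `μ*` induced by a matching `μ` of the market with middlemen:
keep all matched buyer–seller pairs (dropping the middlemen). -/
def star (f : MMatch B M S) : B → Option S := fun i => (f i).map Prod.snd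

/-- `m(i,k)`: the lowest-indexed middleman `j` maximizing `â_{ijk}`. -/
def bestMid [Nonempty M] [LinearOrder M] (Ah : B → M → S → ℝ) (i : B) (k : S) : M :=
  (Finset.univ.filter fun j => ∀ j' : M, Ah i j' k ≤ Ah i j k).min' (by
    obtain ⟨j, -, hj⟩ := Finset.exists_max_image (Finset.univ : Finset M)
      (fun j => Ah i j k) Finset.univ_nonempty
    exact ⟨j, Finset.mem_filter.mpr ⟨Finset.mem_univ _, fun j' => hj j' (Finset.mem_univ _)⟩⟩)

/-- The matching `σ^△` of the market with middlemen induced by a two-sided matching `σ`: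
each matched pair `{i,k}` of `σ` trades through the best middleman `m(i,k)`
(and every other middleman is a singleton). -/
def triangle [Nonempty M] [LinearOrder M] (Ah : B → M → S → ℝ) (g : B → Option S) :
    MMatch B M S :=
  fun i => (g i).map fun k => (some (bestMid Ah i k), k)

/-- The core of a TU game on the finite player set `P`. -/
def core {P : Type*} [Fintype P] (v : Finset P → ℝ) : Set (P → ℝ) :=
  { x | ∑ t, x t = v Finset.univ ∧ ∀ T : Finset P, v T ≤ ∑ t ∈ T, x t }

/-- Augment a payoff vector of the two-sided market with zero payoffs to all middlemen. -/
def aug (xz : B ⊕ S → ℝ) : Player B M S → ℝ := fun t =>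
  match t with
  | Sum.inl i => xz (Sum.inl i)
  | Sum.inr (Sum.inl _) => 0
  | Sum.inr (Sum.inr k) => xz (Sum.inr k)

/-- Restrict a payoff vector of the market with middlemen to the buyers and sellers. -/
def restrictBS (X : Player B M S → ℝ) : B ⊕ S → ℝ := fun t =>
  match t with
  | Sum.inl i => X (buyer i)
  | Sum.inr k => X (seller k)

/-- The set `T ∩ (B ∪ S)` of buyers and sellers of a coalition `T`. -/
def bsPart (T : Finset (Player B M S)) : Finset (B ⊕ S) :=
  Finset.univ.filter fun t =>
    match t with
    | Sum.inl i => buyer i ∈ T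
    | Sum.inr k => (seller k : Player B M S) ∈ T

/-- The coalition `R ∪ M` consisting of the buyers and sellers of `R` together with
all middlemen. -/
def withAllMid (R : Finset (B ⊕ S)) : Finset (Player B M S) :=
  Finset.univ.filter fun t =>
    match t with
    | Sum.inl i => Sum.inl i ∈ R
    | Sum.inr (Sum.inl _) => True
    | Sum.inr (Sum.inr k) => Sum.inr k ∈ R

end Middlemen

namespace Middlemen

/-!
Letting every pair matched in `γ*` trade through a middleman optimal for that pair, and conversely
forgetting the middlemen of a matching in `γ`, shows `w_γ* (R) = v_γ (R ∪ M)` for every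
`R ⊆ B ∪ S`. A payoff vector that is zero on `M` pays the coalitions `R` and `R ∪ M` the same
amount, so the core conditions of `v_γ` at the coalitions `R ∪ M` are those of `w_γ*` at the
coalitions `R`.
-/

section Coalitions

variable {B M S : Type*} [Fintype B] [Fintype S]

@[simp]
theorem inl_mem_bsPart {T : Finset (Player B M S)} {i : B} :
    Sum.inl i ∈ bsPart T ↔ buyer i ∈ T := by
  simp [bsPart]

@[simp]
theorem inr_mem_bsPart {T : Finset (Player B M S)} {k : S} :
    Sum.inr k ∈ bsPart T ↔ seller k ∈ T := by
  simp [bsPart]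

variable [Fintype M]

@[simp]
theorem buyer_mem_withAllMid {R : Finset (B ⊕ S)} {i : B} :
    (buyer i : Player B M S) ∈ withAllMid R ↔ Sum.inl i ∈ R := by
  simp [withAllMid, buyer]

@[simp]
theorem mid_mem_withAllMid (R : Finset (B ⊕ S)) (j : M) :
    (mid j : Player B M S) ∈ withAllMid R := by
  simp [withAllMid, mid]

@[simp]
theorem seller_mem_withAllMid {R : Finset (B ⊕ S)} {k : S} :
    (seller k : Player B M S) ∈ withAllMid R ↔ Sum.inr k ∈ R := by
  simp [withAllMid, seller]

theorem bsPart_withAllMid (R : Finset (B ⊕ S)) :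
    bsPart (withAllMid R : Finset (Player B M S)) = R := by
  ext (i | k) <;> simp

theorem withAllMid_univ : withAllMid (Finset.univ : Finset (B ⊕ S)) =
    (Finset.univ : Finset (Player B M S)) := by
  ext (i | j | k) <;> simp [withAllMid]

theorem sum_player {G : Type*} [AddCommMonoid G] (F : Player B M S → G) :
    ∑ t, F t = ∑ j, F (mid j) + (∑ i, F (buyer i) + ∑ k, F (seller k)) := by
  simp only [Fintype.sum_sum_type, buyer, mid, seller]
  exact add_left_comm _ _ _

theorem sum_withAllMid (X : Player B M S → ℝ) (R : Finset (B ⊕ S)) :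
    ∑ t ∈ withAllMid R, X t = ∑ j, X (mid j) + ∑ t ∈ R, restrictBS X t := by
  rw [← Fintype.sum_ite_mem (withAllMid R), ← Fintype.sum_ite_mem R, sum_player,
    Fintype.sum_sum_type]
  simp only [mid_mem_withAllMid, buyer_mem_withAllMid, seller_mem_withAllMid, if_true, restrictBS]

theorem restrictBS_mem_core_withAllMid {v : Finset (Player B M S) → ℝ} {X : Player B M S → ℝ}
    (hX : X ∈ core v) (hmid : ∀ j, X (mid j) = 0) :
    restrictBS X ∈ core fun R => v (withAllMid R) := by
  obtain ⟨hX_total, hX_stable⟩ := hX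
  have sum_eq (R : Finset (B ⊕ S)) :
      ∑ t ∈ R, restrictBS X t = ∑ t ∈ (withAllMid R : Finset (Player B M S)), X t := by
    simp only [sum_withAllMid, hmid, Finset.sum_const_zero, zero_add]
  refine ⟨?_, fun R => ?_⟩
  · simp only [sum_eq, withAllMid_univ, hX_total]
  · rw [sum_eq]
    exact hX_stable _

end Coalitions

section Matchings

variable {B M S : Type*}

theorem isMatching_none (T : Finset (Player B M S)) : IsMatching T fun _ => none := by
  simp [IsMatching]

theorem isMatching2_none (R : Finset (B ⊕ S)) : IsMatching2 R fun _ => none := by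
  simp [IsMatching2]

/-- The matching of the market with middlemen in which each pair `{i, k}` of the two-sided
matching `g` trades through the middleman `m i k`. The matching `triangle Ah g` is the case
`m = bestMid Ah`; allowing any `m` avoids having to order `M`. -/
def mediate (m : B → S → M) (g : B → Option S) : MMatch B M S :=
  fun i => (g i).map fun k => (some (m i k), k)

theorem mediate_eq_some_iff {m : B → S → M} {g : B → Option S} {i : B} {o : Option M} {k : S} :
    mediate m g i = some (o, k) ↔ g i = some k ∧ o = some (m i k) := by
  simp only [mediate, Option.map_eq_some_iff, Prod.mk.injEq]
  grind

theorem star_eq_some_iff {f : MMatch B M S} {i : B} {k : S} :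
    star f i = some k ↔ ∃ o, f i = some (o, k) := by
  simp [star]

theorem IsMatching2.mediate [Fintype B] [Fintype M] [Fintype S] {R : Finset (B ⊕ S)}
    {g : B → Option S} (hg : IsMatching2 R g) (m : B → S → M) :
    IsMatching (withAllMid R) (mediate m g) := by
  obtain ⟨hg_mem, hg_inj⟩ := hg
  refine ⟨fun i o k h => ?_, fun i i' o o' k h h' => ?_⟩
  · obtain ⟨hi, hk⟩ := hg_mem i k (mediate_eq_some_iff.mp h).1
    exact ⟨buyer_mem_withAllMid.mpr hi, seller_mem_withAllMid.mpr hk,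
      fun j _ => mid_mem_withAllMid R j⟩
  · exact hg_inj i i' k (mediate_eq_some_iff.mp h).1 (mediate_eq_some_iff.mp h').1

theorem IsMatching.star [Fintype B] [Fintype S] {T : Finset (Player B M S)} {f : MMatch B M S}
    (hf : IsMatching T f) : IsMatching2 (bsPart T) (star f) := by
  obtain ⟨hf_mem, hf_inj⟩ := hf
  refine ⟨fun i k h => ?_, fun i i' k h h' => ?_⟩
  · obtain ⟨o, ho⟩ := star_eq_some_iff.mp h
    obtain ⟨hi, hk, -⟩ := hf_mem i o k ho
    exact ⟨inl_mem_bsPart.mpr hi, inr_mem_bsPart.mpr hk⟩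
  · obtain ⟨o, ho⟩ := star_eq_some_iff.mp h
    obtain ⟨o', ho'⟩ := star_eq_some_iff.mp h'
    exact hf_inj i i' o o' k ho ho'

end Matchings

section Worth

variable {B M S : Type*} [Fintype B]

theorem mval_le_vGame [Finite M] [Finite S] (A : B → S → ℝ) (Ah : B → M → S → ℝ)
    {T : Finset (Player B M S)} {f : MMatch B M S} (hf : IsMatching T f) :
    mval A Ah f ≤ vGame A Ah T := by
  refine le_csSup ((Set.finite_range (mval A Ah)).bddAbove.mono ?_) ⟨f, hf, rfl⟩
  rintro _ ⟨f', -, rfl⟩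
  exact ⟨f', rfl⟩

theorem vGame_le {A : B → S → ℝ} {Ah : B → M → S → ℝ} {T : Finset (Player B M S)} {r : ℝ}
    (h : ∀ f, IsMatching T f → mval A Ah f ≤ r) : vGame A Ah T ≤ r := by
  refine csSup_le ⟨_, _, isMatching_none T, rfl⟩ ?_
  rintro _ ⟨f, hf, rfl⟩
  exact h f hf

theorem m2val_le_wGame [Finite S] (As : B → S → ℝ) {R : Finset (B ⊕ S)} {g : B → Option S}
    (hg : IsMatching2 R g) : m2val As g ≤ wGame As R := by
  refine le_csSup ((Set.finite_range (m2val As)).bddAbove.mono ?_) ⟨g, hg, rfl⟩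
  rintro _ ⟨g', -, rfl⟩
  exact ⟨g', rfl⟩

theorem wGame_le {As : B → S → ℝ} {R : Finset (B ⊕ S)} {r : ℝ}
    (h : ∀ g, IsMatching2 R g → m2val As g ≤ r) : wGame As R ≤ r := by
  refine csSup_le ⟨_, _, isMatching2_none R, rfl⟩ ?_
  rintro _ ⟨g, hg, rfl⟩
  exact h g hg

theorem mval_mediate (A : B → S → ℝ) (Ah : B → M → S → ℝ) (m : B → S → M) (g : B → Option S) :
    mval A Ah (mediate m g) = m2val (fun i k => Ah i (m i k) k) g := by
  refine Finset.sum_congr rfl fun i _ => ?_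
  cases hi : g i <;> simp [mediate, hi]

theorem mval_le_m2val_star {A As : B → S → ℝ} {Ah : B → M → S → ℝ}
    (hA : ∀ i k, A i k ≤ As i k) (hAh : ∀ i j k, Ah i j k ≤ As i k) (f : MMatch B M S) :
    mval A Ah f ≤ m2val As (star f) := by
  refine Finset.sum_le_sum fun i _ => ?_
  rcases hi : f i with _ | ⟨_ | j, k⟩
  · simp [star, hi]
  · simpa [star, hi] using hA i k
  · simpa [star, hi] using hAh i j k

end Worth

section AssociatedMarket

variable {B M S : Type*} [Fintype M] [Nonempty M]

theorem le_Astar (Ah : B → M → S → ℝ) (i : B) (j : M) (k : S) : Ah i j k ≤ Astar Ah i k :=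
  Finset.le_sup' (fun j => Ah i j k) (Finset.mem_univ j)

theorem exists_eq_Astar (Ah : B → M → S → ℝ) :
    ∃ m : B → S → M, (fun i k => Ah i (m i k) k) = Astar Ah := by
  have attained (i : B) (k : S) : ∃ j, Ah i j k = Astar Ah i k := by
    obtain ⟨j, -, hj⟩ := Finset.exists_mem_eq_sup' Finset.univ_nonempty fun j => Ah i j k
    exact ⟨j, hj.symm⟩
  choose m hm using attained
  exact ⟨m, funext₂ hm⟩

variable [Fintype B] [Fintype S]

theorem wGame_Astar_le_vGame (A : B → S → ℝ) (Ah : B → M → S → ℝ) (R : Finset (B ⊕ S)) :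
    wGame (Astar Ah) R ≤ vGame A Ah (withAllMid R) := by
  obtain ⟨m, hm⟩ := exists_eq_Astar Ah
  refine wGame_le fun g hg => ?_
  calc m2val (Astar Ah) g = mval A Ah (mediate m g) := by rw [mval_mediate, hm]
    _ ≤ vGame A Ah (withAllMid R) := mval_le_vGame A Ah (hg.mediate m)

theorem vGame_le_wGame_Astar {A : B → S → ℝ} {Ah : B → M → S → ℝ}
    (hA : ∀ i k, A i k ≤ Astar Ah i k) (T : Finset (Player B M S)) :
    vGame A Ah T ≤ wGame (Astar Ah) (bsPart T) :=
  vGame_le fun f hf =>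
    (mval_le_m2val_star hA (le_Astar Ah) f).trans (m2val_le_wGame _ hf.star)

theorem wGame_Astar_eq_vGame {A : B → S → ℝ} {Ah : B → M → S → ℝ}
    (hA : ∀ i k, A i k ≤ Astar Ah i k) (R : Finset (B ⊕ S)) :
    wGame (Astar Ah) R = vGame A Ah (withAllMid R) := by
  refine (wGame_Astar_le_vGame A Ah R).antisymm ?_
  simpa only [bsPart_withAllMid] using vGame_le_wGame_Astar hA (withAllMid R)

theorem restrictBS_mem_core_general {A : B → S → ℝ} {Ah : B → M → S → ℝ}
    (hA : ∀ i k, A i k ≤ Astar Ah i k) {X : Player B M S → ℝ} (hX : X ∈ core (vGame A Ah))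
    (hmid : ∀ j, X (mid j) = 0) : restrictBS X ∈ core (wGame (Astar Ah)) := by
  rw [funext (wGame_Astar_eq_vGame hA)]
  exact restrictBS_mem_core_withAllMid hX hmid

end AssociatedMarket

/-- if `(x;0;z)` is a core allocation of `v_γ` giving every middleman zero,
then its restriction `(x;z)` to the buyers and sellers is in the core of `w_γ*`. -/
theorem restrictBS_mem_core
    {B M S : Type*} [Fintype B] [Fintype M] [Fintype S]
    [Nonempty B] [Nonempty M] [Nonempty S]
    (A : B → S → ℝ) (Ah : B → M → S → ℝ)
    (hA : ∀ i k, 0 ≤ A i k) (hAh : ∀ i j k, A i k ≤ Ah i j k)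
    (X : Player B M S → ℝ) (hX : X ∈ core (vGame A Ah))
    (h0 : ∀ j : M, X (mid j) = 0) :
    restrictBS X ∈ core (wGame (Astar Ah)) := by
  exact restrictBS_mem_core_general
    (fun i k => (hAh i (Classical.arbitrary M) k).trans (le_Astar Ah i _ k)) hX h0

end Middlemen
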